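/- Let P be a measure on ℤ≥0. Then ∑_n E(n) f_P(n) ≤ 1 holds for every e-value E for ℳ if and only if P is a subprobability measure (P(ℤ≥0) ≤ 1) and there exists a probability measure P′ ∈ ℳ with f_P(n) ≤ f_{P′}(n) for all n. Consequently, a probability measure Q on ℤ≥0 satisfies ∑_n E(n) f_Q(n) ≤ 1 for every e-value E for ℳ if and only if Q ∈ ℳ. -/

import Mathlib

open MeasureTheory ENNReal

/-- `ℳ`: monotone probability distributions on `ℤ≥0`. -/
def MonotoneClass : Set (Measure ℕ) :=
  {P | IsProbabilityMeasure P ∧ ∀ n : ℕ, P {n + 1} ≤ P {n}}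

/-- An e-value for `ℳ`. -/
def IsEValueM (E : ℕ → NNReal) : Prop :=
  ∀ P ∈ MonotoneClass, ∑' n : ℕ, (E n : ℝ≥0∞) * P {n} ≤ 1

/-!
The point is that `∑ n, ⨆ m ≥ n, f m ≤ 1` whenever `f` passes every e-value: for `n ≤ a n`, a sum of
indicators of the points `a n` over finitely many `n` is an e-value, because a monotone `P` has
`∑ P {a n} ≤ ∑ P {n} ≤ 1`, and these e-values approach the sum of the suprema. The least antitone
majorant `n ↦ ⨆ m ≥ n, f m` of `f` thus has total mass at most one, and placing the missing mass at
`0` turns it into a monotone probability measure dominating `f`.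
-/

section AntitoneMajorant

variable {α β : Type*} [Preorder α] [CompleteLattice β]

/-- The least antitone function above `f`, namely `a ↦ ⨆ b ≥ a, f b`. The supremum is over the
subtype `Set.Ici a`, so that a choice of near-maximizers is a dependent function. -/
def antitoneMajorant (f : α → β) (a : α) : β :=
  ⨆ b : Set.Ici a, f b

lemma le_antitoneMajorant (f : α → β) (a : α) : f a ≤ antitoneMajorant f a :=
  le_iSup (fun b : Set.Ici a ↦ f b) ⟨a, le_rfl⟩

lemma antitone_antitoneMajorant (f : α → β) : Antitone (antitoneMajorant f) := fun _ _ hab ↦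
  iSup_le fun c ↦ le_iSup_of_le ⟨c, hab.trans c.2⟩ le_rfl

end AntitoneMajorant

lemma finsetSum_iSup_eq_iSup_pi {ι : Type*} {κ : ι → Type*} [∀ i, Nonempty (κ i)] (s : Finset ι)
    (f : ∀ i, κ i → ℝ≥0∞) :
    ∑ i ∈ s, ⨆ k, f i k = ⨆ a : ∀ i, κ i, ∑ i ∈ s, f i (a i) := by
  classical
  calc ∑ i ∈ s, ⨆ k, f i k
      = ∑ i ∈ s, ⨆ a : ∀ i, κ i, f i (a i) :=
        Finset.sum_congr rfl fun i _ ↦ ((Function.surjective_eval i).iSup_comp (f i)).symm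
    _ = ⨆ a : ∀ i, κ i, ∑ i ∈ s, f i (a i) := by
        refine ENNReal.finsetSum_iSup fun a b ↦
          ⟨fun i ↦ if f i (a i) ≤ f i (b i) then b i else a i, fun i ↦ ?_⟩
        dsimp only
        split_ifs with hab
        · exact ⟨hab, le_rfl⟩
        · exact ⟨le_rfl, (not_le.1 hab).le⟩

section SelectionCount

variable {ι α : Type*} [DecidableEq α]

/-- The number of indices `i ∈ s` with `a i = m`, as a function of `m`. For `ι = α = ℕ` and
`n ≤ a n` these are the test e-values for monotonicity. -/
def selectionCount (s : Finset ι) (a : ι → α) (m : α) : NNReal :=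
  ∑ i ∈ s, if m = a i then 1 else 0

lemma tsum_selectionCount_mul (s : Finset ι) (a : ι → α) (f : α → ℝ≥0∞) :
    ∑' m, (selectionCount s a m : ℝ≥0∞) * f m = ∑ i ∈ s, f (a i) := by
  have hcast (m : α) : (selectionCount s a m : ℝ≥0∞) = ∑ i ∈ s, if m = a i then 1 else 0 := by
    simp [selectionCount]
  simp only [hcast, Finset.sum_mul, ite_mul, one_mul, zero_mul]
  rw [Summable.tsum_finsetSum fun _ _ ↦ ENNReal.summable]
  simp only [tsum_ite_eq]

end SelectionCount

lemma measure_le_of_forall_singleton_le {α : Type*} [MeasurableSpace α] [Countable α]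
    [MeasurableSingletonClass α] {μ ν : Measure α} (h : ∀ a, μ {a} ≤ ν {a}) : μ ≤ ν := by
  refine Measure.le_iff.2 fun s hs ↦ ?_
  rw [← μ.tsum_indicator_apply_singleton s hs, ← ν.tsum_indicator_apply_singleton s hs]
  exact ENNReal.tsum_le_tsum fun a ↦ Set.indicator_le_indicator (h a)

lemma isEValueM_selectionCount {s : Finset ℕ} {a : ℕ → ℕ} (ha : ∀ n ∈ s, n ≤ a n) :
    IsEValueM (selectionCount s a) := by
  rintro P ⟨_, hP⟩
  have hanti : Antitone fun n ↦ P {n} := antitone_nat_of_succ_le hP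
  calc ∑' m, (selectionCount s a m : ℝ≥0∞) * P {m}
      = ∑ n ∈ s, P {a n} := tsum_selectionCount_mul s a fun m ↦ P {m}
    _ ≤ ∑ n ∈ s, P {n} := Finset.sum_le_sum fun n hn ↦ hanti (ha n hn)
    _ = P s := sum_measure_singleton
    _ ≤ 1 := prob_le_one

lemma tsum_antitoneMajorant_le_one {f : ℕ → ℝ≥0∞}
    (hf : ∀ E : ℕ → NNReal, IsEValueM E → ∑' n, (E n : ℝ≥0∞) * f n ≤ 1) :
    ∑' n, antitoneMajorant f n ≤ 1 := by
  refine ENNReal.summable.tsum_le_of_sum_le fun s ↦ ?_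
  calc ∑ n ∈ s, antitoneMajorant f n
      = ⨆ a : ∀ n, Set.Ici n, ∑ n ∈ s, f (a n) :=
        finsetSum_iSup_eq_iSup_pi s fun n (m : Set.Ici n) ↦ f m
    _ ≤ 1 := iSup_le fun a ↦ by
        rw [← tsum_selectionCount_mul s (fun n ↦ (a n : ℕ)) f]
        exact hf _ (isEValueM_selectionCount fun n _ ↦ (a n).2)

lemma exists_mem_monotoneClass_ge_of_antitone {g : ℕ → ℝ≥0∞} (hg : Antitone g)
    (hsum : ∑' n, g n ≤ 1) :
    ∃ P ∈ MonotoneClass, ∀ n, g n ≤ P {n} := by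
  let c : ℕ → ℝ≥0∞ := fun n ↦ g n + (Pi.single 0 (1 - ∑' k, g k) : ℕ → ℝ≥0∞) n
  have hgc (n : ℕ) : g n ≤ c n := le_self_add
  have hc : ∑' n, c n = 1 := by
    rw [ENNReal.tsum_add, tsum_pi_single, add_tsub_cancel_of_le hsum]
  let p : PMF ℕ := ⟨c, hc ▸ ENNReal.summable.hasSum⟩
  have hp (n : ℕ) : p.toMeasure {n} = c n :=
    p.toMeasure_apply_singleton n (measurableSet_singleton n)
  refine ⟨p.toMeasure, ⟨inferInstance, fun n ↦ ?_⟩, fun n ↦ (hgc n).trans_eq (hp n).symm⟩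
  calc p.toMeasure {n + 1} = g (n + 1) := by simp [hp, c]
    _ ≤ g n := hg n.le_succ
    _ ≤ p.toMeasure {n} := (hgc n).trans_eq (hp n).symm

lemma exists_mem_monotoneClass_ge_of_forall_isEValueM {f : ℕ → ℝ≥0∞}
    (hf : ∀ E : ℕ → NNReal, IsEValueM E → ∑' n, (E n : ℝ≥0∞) * f n ≤ 1) :
    ∃ P ∈ MonotoneClass, ∀ n, f n ≤ P {n} := by
  obtain ⟨P, hP, hle⟩ := exists_mem_monotoneClass_ge_of_antitone (antitone_antitoneMajorant f)
    (tsum_antitoneMajorant_le_one hf)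
  exact ⟨P, hP, fun n ↦ (le_antitoneMajorant f n).trans (hle n)⟩

/-- **bipolar of `ℳ`; strong testability of monotonicity.**
A measure `P` on `ℤ≥0` satisfies `∑ₙ E(n) f_P(n) ≤ 1` for every e-value `E` for `ℳ` iff
`P` is a subprobability dominated pointwise by some monotone probability `P′ ∈ ℳ`.
Consequently a probability measure `Q` satisfies this for every e-value iff `Q ∈ ℳ`. -/
theorem stmt3 :
    (∀ P : Measure ℕ,
      ((∀ E : ℕ → NNReal, IsEValueM E → ∑' n : ℕ, (E n : ℝ≥0∞) * P {n} ≤ 1) ↔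
        (P Set.univ ≤ 1 ∧ ∃ P' ∈ MonotoneClass, ∀ n : ℕ, P {n} ≤ P' {n}))) ∧
    (∀ Q : Measure ℕ, IsProbabilityMeasure Q →
      ((∀ E : ℕ → NNReal, IsEValueM E → ∑' n : ℕ, (E n : ℝ≥0∞) * Q {n} ≤ 1) ↔
        Q ∈ MonotoneClass)) := by
  refine ⟨fun P ↦ ⟨fun h ↦ ?_, ?_⟩, fun Q _ ↦ ⟨fun h ↦ ?_, fun hQ E hE ↦ hE Q hQ⟩⟩
  · obtain ⟨P', hP', hle⟩ := exists_mem_monotoneClass_ge_of_forall_isEValueM h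
    have : IsProbabilityMeasure P' := hP'.1
    exact ⟨(measure_le_of_forall_singleton_le hle Set.univ).trans prob_le_one, P', hP', hle⟩
  · rintro ⟨-, P', hP', hle⟩ E hE
    exact (ENNReal.tsum_le_tsum fun n ↦ mul_le_mul_right (hle n) _).trans (hE P' hP')
  · obtain ⟨P', hP', hle⟩ := exists_mem_monotoneClass_ge_of_forall_isEValueM h
    have : IsProbabilityMeasure P' := hP'.1
    have hQP' : Q = P' :=
      Measure.eq_of_le_of_isProbabilityMeasure (measure_le_of_forall_singleton_le hle)
    exact hQP' ▸ hP'
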